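/- arXiv:2402.08555 — 2 statements merged into one kernel-verified Lean document; each statement's English description precedes it below -/
import Mathlib

section
/- Let a = (a_1,…,a_n) and b = (b_1,…,b_m) be finite sequences of natural numbers. Then Υ(a)·Υ(b) = ∑_{c} Υ(c), where the sum ranges over all shuffles c of a and b, i.e. over all n-element subsets S of the positions {1,…,n+m}, with c the sequence of length n+m placing the entries of a (in order) at the positions of S and the entries of b (in order) at the remaining positions. -/
open scoped BigOperators

/-- The `Υ` function on a finite sequence of naturals: `0` unless the sequence is
nonincreasing, and `1 / ∏_v m_v!` otherwise, where `m_v` is the number of entries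
equal to `v`. -/
noncomputable def Upsilon {n : ℕ} (z : Fin n → ℕ) : ℚ :=
  if ∀ i j : Fin n, i ≤ j → z j ≤ z i then
    ((∏ v ∈ Finset.univ.image z,
        (Finset.univ.filter fun i => z i = v).card.factorial : ℕ) : ℚ)⁻¹
  else 0

/-- The shuffle of the sequences `a` and `b` determined by a set `S` of positions of
cardinality `n`: the entries of `a` are placed, in order, at the positions of `S`, and
the entries of `b`, in order, at the remaining positions. (Junk value `0` if
`S.card ≠ n`.) -/
noncomputable def shuffleSeq {n m : ℕ} (a : Fin n → ℕ) (b : Fin m → ℕ)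
    (S : Finset (Fin (n + m))) : Fin (n + m) → ℕ := fun i =>
  if h : i ∈ S then
    if hc : S.card = n then a ((S.orderIsoOfFin hc).symm ⟨i, h⟩) else 0
  else
    if hc : Sᶜ.card = m then b ((Sᶜ.orderIsoOfFin hc).symm ⟨i, Finset.mem_compl.mpr h⟩)
    else 0

/-!
The multiset of entries of `z` is `univ.val.map z`. If a shuffle of `a` and `b` is
nonincreasing, then so are its subsequences `a` and `b`; hence both sides vanish unless `a` and `b`
are nonincreasing. In that case every nonincreasing shuffle is the same sequence `c`, the sorted
union of the entries of `a` and `b`, and it arises from exactly those `S` on which `c` takes each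
value `v` as often as `a` does. With `p v` and `q v` the multiplicities of `v` in `a` and `b`,
there are `∏ v, (p v + q v).choose (p v)` such `S`, each contributing `(∏ v, (p v + q v)!)⁻¹`,
for a total of `(∏ v, (p v)!)⁻¹ * (∏ v, (q v)!)⁻¹`.
-/

open Finset
open scoped Nat

section MultisetOfEntries

variable {ι α : Type*}

lemma count_map_val [DecidableEq α] (f : ι → α) (t : Finset ι) (v : α) :
    (t.val.map f).count v = #{i ∈ t | f i = v} := by
  simp only [Multiset.count_map, eq_comm (a := v)]
  rfl

lemma map_val_add_map_val_compl [Fintype ι] [DecidableEq ι] (f : ι → α) (S : Finset ι) :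
    S.val.map f + Sᶜ.val.map f = univ.val.map f := by
  rw [← Multiset.map_add, ← S.union_compl, ← disjUnion_eq_union _ _ disjoint_compl_right]
  rfl

lemma forall_mem_of_map_univ_val_eq_add {κ μ : Type*} [Fintype ι] [Fintype κ] [Fintype μ]
    {f : ι → α} {g : κ → α} {h : μ → α} {V : Finset α}
    (hfgh : univ.val.map f = univ.val.map g + univ.val.map h) (hg : ∀ j, g j ∈ V)
    (hh : ∀ k, h k ∈ V) (i : ι) : f i ∈ V := by
  have hmem : f i ∈ univ.val.map g + univ.val.map h :=
    hfgh ▸ Multiset.mem_map_of_mem f (mem_univ i)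
  simp only [Multiset.mem_add, Multiset.mem_map, mem_val, mem_univ, true_and] at hmem
  rcases hmem with ⟨j, hj⟩ | ⟨k, hk⟩
  · exact hj ▸ hg j
  · exact hk ▸ hh k

lemma map_univ_val_comp_orderEmbOfFin [LinearOrder ι] (f : ι → α) (S : Finset ι) {k : ℕ}
    (hS : #S = k) : univ.val.map (f ∘ S.orderEmbOfFin hS) = S.val.map f := by
  rw [← Multiset.map_map]
  exact congrArg (Multiset.map f ·.val) (S.map_orderEmbOfFin_univ hS)

lemma eq_of_antitone_of_map_univ_val_eq [PartialOrder α] {n : ℕ} {f g : Fin n → α}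
    (hf : Antitone f) (hg : Antitone g) (h : univ.val.map f = univ.val.map g) : f = g := by
  rw [Fin.univ_val_map, Fin.univ_val_map, Multiset.coe_eq_coe] at h
  exact List.ofFn_injective (h.eq_of_sortedGE hf.sortedGE_ofFn hg.sortedGE_ofFn)

lemma exists_antitone_map_univ_val_eq [LinearOrder α] {n : ℕ} (f : Fin n → α) :
    ∃ g : Fin n → α, Antitone g ∧ univ.val.map g = univ.val.map f := by
  refine ⟨f ∘ Tuple.sort (OrderDual.toDual ∘ f), Tuple.monotone_sort (OrderDual.toDual ∘ f), ?_⟩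
  rw [Fin.univ_val_map, Fin.univ_val_map, Multiset.coe_eq_coe]
  exact Equiv.Perm.ofFn_comp_perm _ f

lemma exists_antitone_map_univ_val_eq_add [LinearOrder α] {n m : ℕ} (a : Fin n → α)
    (b : Fin m → α) :
    ∃ c : Fin (n + m) → α, Antitone c ∧ univ.val.map c = univ.val.map a + univ.val.map b := by
  obtain ⟨c, hc, hcab⟩ := exists_antitone_map_univ_val_eq (Fin.append a b)
  refine ⟨c, hc, hcab.trans ?_⟩
  simp only [Fin.univ_val_map, List.ofFn_fin_append, Multiset.coe_add]

-- A subset `S` of `t` amounts to an independent choice of its fibres `{i ∈ S | f i = v}`.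
lemma card_filter_powerset_map_val_eq [DecidableEq α] (t : Finset ι) (f : ι → α)
    (s : Multiset α) {V : Finset α} (hf : ∀ i ∈ t, f i ∈ V) (hs : ∀ v ∈ s, v ∈ V) :
    #{S ∈ t.powerset | S.val.map f = s} =
      ∏ v ∈ V, ((t.val.map f).count v).choose (s.count v) := by
  classical
  have hpi : #(V.pi fun v ↦ {i ∈ t | f i = v}.powersetCard (s.count v)) =
      ∏ v ∈ V, ((t.val.map f).count v).choose (s.count v) := by
    simp only [card_pi, card_powersetCard, count_map_val]
  rw [← hpi]
  refine card_bij' (fun S _ v _ ↦ {i ∈ S | f i = v})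
    (fun g _ ↦ {i ∈ t | ∃ h : f i ∈ V, i ∈ g (f i) h}) ?fibres_mem ?union_mem ?left_inv ?right_inv
  case fibres_mem =>
    simp only [mem_filter, mem_powerset, mem_pi, mem_powersetCard]
    rintro S ⟨hSt, rfl⟩ v -
    exact ⟨filter_subset_filter _ hSt, (count_map_val f S v).symm⟩
  case union_mem =>
    intro g hg
    simp only [mem_pi, mem_powersetCard] at hg
    simp only [mem_filter, mem_powerset, filter_subset, true_and]
    ext v
    rw [count_map_val, filter_filter]
    by_cases hv : v ∈ V
    · rw [← (hg v hv).2]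
      congr 1
      ext i
      have hgv := @(hg v hv).1 i
      grind
    · rw [Multiset.count_eq_zero_of_notMem (mt (hs v) hv), card_eq_zero, filter_eq_empty_iff]
      grind
  case left_inv =>
    intro S hS
    simp only [mem_filter, mem_powerset] at hS
    ext i
    grind
  case right_inv =>
    intro g hg
    simp only [mem_pi, mem_powersetCard] at hg
    ext v hv i
    have hgv := @(hg v hv).1 i
    grind

end MultisetOfEntries

lemma inv_prod_factorial_mul_inv_prod_factorial {ι K : Type*} [Field K] [CharZero K]
    (V : Finset ι) (p q : ι → ℕ) :
    ((∏ v ∈ V, (p v)! : ℕ) : K)⁻¹ * ((∏ v ∈ V, (q v)! : ℕ) : K)⁻¹ =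
      (∏ v ∈ V, (p v + q v).choose (p v) : ℕ) * ((∏ v ∈ V, (p v + q v)! : ℕ) : K)⁻¹ := by
  have hprod : (∏ v ∈ V, (p v + q v).choose (p v)) * (∏ v ∈ V, (p v)!) * ∏ v ∈ V, (q v)! =
      ∏ v ∈ V, (p v + q v)! := by
    rw [← prod_mul_distrib, ← prod_mul_distrib]
    exact prod_congr rfl fun v _ ↦ by
      rw [Nat.choose_symm_add, Nat.add_choose_mul_factorial_mul_factorial]
  have hne (r : ι → ℕ) : ((∏ v ∈ V, (r v)! : ℕ) : K) ≠ 0 :=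
    Nat.cast_ne_zero.2 (prod_ne_zero_iff.2 fun v _ ↦ (r v).factorial_ne_zero)
  have hp := hne p
  have hq := hne q
  have hpq := hne fun v ↦ p v + q v
  field_simp
  exact_mod_cast hprod.symm.trans (by ring)

section Upsilon

variable {n : ℕ} {z : Fin n → ℕ}

lemma upsilon_of_not_antitone (hz : ¬ Antitone z) : Upsilon z = 0 :=
  if_neg fun h ↦ hz fun i j ↦ h i j

lemma upsilon_of_antitone (hz : Antitone z) {V : Finset ℕ} (hV : ∀ i, z i ∈ V) :
    Upsilon z = ((∏ v ∈ V, ((univ.val.map z).count v)! : ℕ) : ℚ)⁻¹ := by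
  have hsub : univ.image z ⊆ V := by simpa [subset_iff] using hV
  have hout : ∀ v ∈ V, v ∉ univ.image z → (#{i | z i = v})! = 1 := by
    intro v _ hv
    rw [filter_eq_empty_iff.2 (by simpa using hv), card_empty, Nat.factorial_zero]
  simp only [Upsilon, if_pos fun _ _ h ↦ hz h, count_map_val, prod_subset hsub hout]

end Upsilon

section Shuffle

variable {n m : ℕ} {a : Fin n → ℕ} {b : Fin m → ℕ} {S : Finset (Fin (n + m))}

lemma card_compl_eq_of_card_eq (hS : #S = n) : #Sᶜ = m := by
  rw [card_compl, hS, Fintype.card_fin, Nat.add_sub_cancel_left]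

lemma shuffleSeq_comp_orderEmbOfFin (a : Fin n → ℕ) (b : Fin m → ℕ) (hS : #S = n) :
    shuffleSeq a b S ∘ S.orderEmbOfFin hS = a := by
  ext k
  have h : (⟨S.orderEmbOfFin hS k, S.orderEmbOfFin_mem hS k⟩ : S) = S.orderIsoOfFin hS k := rfl
  simp [shuffleSeq, hS, h]

lemma shuffleSeq_comp_orderEmbOfFin_compl (a : Fin n → ℕ) (b : Fin m → ℕ) (hS : #Sᶜ = m) :
    shuffleSeq a b S ∘ Sᶜ.orderEmbOfFin hS = b := by
  ext k
  have hk := Sᶜ.orderEmbOfFin_mem hS k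
  have h : (⟨Sᶜ.orderEmbOfFin hS k, hk⟩ : (Sᶜ : Finset _)) = Sᶜ.orderIsoOfFin hS k := rfl
  simp [shuffleSeq, hS, h, mem_compl.1 hk]

lemma map_val_shuffleSeq (a : Fin n → ℕ) (b : Fin m → ℕ) (hS : #S = n) :
    S.val.map (shuffleSeq a b S) = univ.val.map a := by
  rw [← map_univ_val_comp_orderEmbOfFin _ S hS, shuffleSeq_comp_orderEmbOfFin]

lemma map_compl_val_shuffleSeq (a : Fin n → ℕ) (b : Fin m → ℕ) (hS : #Sᶜ = m) :
    Sᶜ.val.map (shuffleSeq a b S) = univ.val.map b := by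
  rw [← map_univ_val_comp_orderEmbOfFin _ Sᶜ hS, shuffleSeq_comp_orderEmbOfFin_compl]

lemma map_univ_val_shuffleSeq (a : Fin n → ℕ) (b : Fin m → ℕ) (hS : #S = n) :
    univ.val.map (shuffleSeq a b S) = univ.val.map a + univ.val.map b := by
  rw [← map_val_add_map_val_compl _ S, map_val_shuffleSeq a b hS,
    map_compl_val_shuffleSeq a b (card_compl_eq_of_card_eq hS)]

lemma shuffleSeq_comp_orderEmbOfFin_eq_self (c : Fin (n + m) → ℕ) (hS : #S = n) (hS' : #Sᶜ = m) :
    shuffleSeq (c ∘ S.orderEmbOfFin hS) (c ∘ Sᶜ.orderEmbOfFin hS') S = c := by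
  ext i
  by_cases hi : i ∈ S <;> simp [shuffleSeq, hi, hS, hS', ← coe_orderIsoOfFin_apply]

lemma antitone_and_antitone_of_antitone_shuffleSeq (hS : #S = n)
    (h : Antitone (shuffleSeq a b S)) : Antitone a ∧ Antitone b := by
  have hS' := card_compl_eq_of_card_eq hS
  constructor
  · simpa only [shuffleSeq_comp_orderEmbOfFin] using
      h.comp_monotone (S.orderEmbOfFin hS).monotone
  · simpa only [shuffleSeq_comp_orderEmbOfFin_compl] using
      h.comp_monotone (Sᶜ.orderEmbOfFin hS').monotone

lemma card_eq_and_antitone_shuffleSeq_iff {c : Fin (n + m) → ℕ} (ha : Antitone a)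
    (hb : Antitone b) (hc : Antitone c)
    (hcab : univ.val.map c = univ.val.map a + univ.val.map b) :
    #S = n ∧ Antitone (shuffleSeq a b S) ↔ S.val.map c = univ.val.map a := by
  constructor
  · rintro ⟨hS, hanti⟩
    have hshuffle : shuffleSeq a b S = c := eq_of_antitone_of_map_univ_val_eq hanti hc
      ((map_univ_val_shuffleSeq a b hS).trans hcab.symm)
    rw [← hshuffle, map_val_shuffleSeq a b hS]
  · intro hSa
    have hS : #S = n := by simpa using congrArg Multiset.card hSa
    have hS' := card_compl_eq_of_card_eq hS
    have hSb : Sᶜ.val.map c = univ.val.map b := by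
      rwa [← map_val_add_map_val_compl c S, hSa, add_right_inj] at hcab
    have hca : c ∘ S.orderEmbOfFin hS = a := eq_of_antitone_of_map_univ_val_eq
      (hc.comp_monotone (S.orderEmbOfFin hS).monotone) ha
      ((map_univ_val_comp_orderEmbOfFin c S hS).trans hSa)
    have hcb : c ∘ Sᶜ.orderEmbOfFin hS' = b := eq_of_antitone_of_map_univ_val_eq
      (hc.comp_monotone (Sᶜ.orderEmbOfFin hS').monotone) hb
      ((map_univ_val_comp_orderEmbOfFin c Sᶜ hS').trans hSb)
    refine ⟨hS, ?_⟩
    rwa [← hca, ← hcb, shuffleSeq_comp_orderEmbOfFin_eq_self]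

variable {V : Finset ℕ}

lemma card_filter_antitone_shuffleSeq (ha : Antitone a) (hb : Antitone b) (haV : ∀ i, a i ∈ V)
    (hbV : ∀ j, b j ∈ V) :
    #{S : Finset (Fin (n + m)) | #S = n ∧ Antitone (shuffleSeq a b S)} =
      ∏ v ∈ V, ((univ.val.map a).count v + (univ.val.map b).count v).choose
        ((univ.val.map a).count v) := by
  obtain ⟨c, hc, hcab⟩ := exists_antitone_map_univ_val_eq_add a b
  have hcV := forall_mem_of_map_univ_val_eq_add hcab haV hbV
  simp only [card_eq_and_antitone_shuffleSeq_iff ha hb hc hcab, ← Multiset.count_add, ← hcab]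
  rw [← card_filter_powerset_map_val_eq univ c _ (fun i _ ↦ hcV i) (by simpa using haV),
    powerset_univ]

lemma upsilon_shuffleSeq_of_antitone (hS : #S = n) (h : Antitone (shuffleSeq a b S))
    (haV : ∀ i, a i ∈ V) (hbV : ∀ j, b j ∈ V) :
    Upsilon (shuffleSeq a b S) =
      ((∏ v ∈ V, ((univ.val.map a).count v + (univ.val.map b).count v)! : ℕ) : ℚ)⁻¹ := by
  have hentries := map_univ_val_shuffleSeq a b hS
  simp only [upsilon_of_antitone h (forall_mem_of_map_univ_val_eq_add hentries haV hbV), hentries,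
    Multiset.count_add]

end Shuffle

/-- `Υ(a)·Υ(b)` equals the sum of `Υ(c)` over all shuffles `c` of `a` and `b`. -/
theorem upsilon_mul_eq_sum_shuffles {n m : ℕ} (a : Fin n → ℕ) (b : Fin m → ℕ) :
    Upsilon a * Upsilon b =
      ∑ S ∈ Finset.univ.filter (fun S : Finset (Fin (n + m)) => S.card = n),
        Upsilon (shuffleSeq a b S) := by
  by_cases hab : Antitone a ∧ Antitone b
  · obtain ⟨ha, hb⟩ := hab
    let V := univ.image a ∪ univ.image b
    have haV : ∀ i, a i ∈ V := fun i ↦ mem_union_left _ (mem_image_of_mem a (mem_univ i))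
    have hbV : ∀ j, b j ∈ V := fun j ↦ mem_union_right _ (mem_image_of_mem b (mem_univ j))
    rw [upsilon_of_antitone ha haV, upsilon_of_antitone hb hbV,
      inv_prod_factorial_mul_inv_prod_factorial, ← card_filter_antitone_shuffleSeq ha hb haV hbV,
      ← nsmul_eq_mul, ← filter_filter, ← sum_const, sum_filter]
    refine sum_congr rfl fun S hS ↦ ?_
    split_ifs with hanti
    · exact (upsilon_shuffleSeq_of_antitone (mem_filter.1 hS).2 hanti haV hbV).symm
    · exact (upsilon_of_not_antitone hanti).symm
  · have hright : ∀ S ∈ univ.filter (fun S : Finset (Fin (n + m)) ↦ #S = n),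
        Upsilon (shuffleSeq a b S) = 0 := fun S hS ↦ upsilon_of_not_antitone fun h ↦
      hab (antitone_and_antitone_of_antitone_shuffleSeq (mem_filter.1 hS).2 h)
    rw [sum_eq_zero hright, mul_eq_zero]
    exact (not_and_or.1 hab).imp upsilon_of_not_antitone upsilon_of_not_antitone
end

section
/- Let R be a (not necessarily commutative) ring containing ℚ (so that division by factorials makes sense), let m ≥ 1 and let h_1, …, h_m ∈ R. Then for every n ≥ 1: ∑_{k=1}^{n} ∑_{(n_1,…,n_k)} ∑_{m ≥ z_1 > z_2 > ⋯ > z_k ≥ 1} (1/(n_1!⋯n_k!)) · h_{z_1}^{n_1} h_{z_2}^{n_2} ⋯ h_{z_k}^{n_k} = ∑_{z ∈ {1,…,m}^n} Υ(z) · h_{z_1} h_{z_2} ⋯ h_{z_n}, where the middle sum is over all compositions (n_1,…,n_k) of n into k positive parts, i.e. n_1 + ⋯ + n_k = n with each n_i ≥ 1. -/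
open scoped BigOperators

/-!
Both sides are sums over nonincreasing words `w` of length `n` in the letters `1, …, m`, each word
contributing `∏ᵥ (mᵥ!)⁻¹ • h_{w₁} ⋯ h_{wₙ}`, where `mᵥ` is the multiplicity of `v` in `w`. On the
right this is the definition of `Υ`. On the left, grouping equal adjacent letters identifies `w`
with its block sizes `(n₁, …, n_k)`, a composition of `n`, together with its distinct letters
`z₁ > ⋯ > z_k`; then `nᵢ` is the multiplicity of `zᵢ` and the product of the letters is
`h_{z₁}^{n₁} ⋯ h_{z_k}^{n_k}`.
-/

section RunLengthDecode

variable {α : Type*} {k : ℕ} {c : Fin k → ℕ} {z : Fin k → α}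

/-- The word in which `z 0` is repeated `c 0` times, then `z 1` is repeated `c 1` times, and so on.
It encodes a summand `(c, z)` of the composition sum. -/
def runLengthDecode (c : Fin k → ℕ) (z : Fin k → α) : List α :=
  (List.ofFn fun i => List.replicate (c i) (z i)).flatten

theorem length_runLengthDecode (c : Fin k → ℕ) (z : Fin k → α) :
    (runLengthDecode c z).length = ∑ i, c i := by
  simp [runLengthDecode, List.length_flatten, List.map_ofFn, List.sum_ofFn]

theorem mem_runLengthDecode (hc : ∀ i, 0 < c i) {v : α} :
    v ∈ runLengthDecode c z ↔ v ∈ Set.range z := by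
  simp [runLengthDecode, List.mem_ofFn, (hc _).ne', eq_comm]

theorem prod_map_runLengthDecode {M : Type*} [Monoid M] (h : α → M) (c : Fin k → ℕ)
    (z : Fin k → α) :
    ((runLengthDecode c z).map h).prod = (List.ofFn fun i => h (z i) ^ c i).prod := by
  simp [runLengthDecode, List.map_flatten, List.prod_flatten, List.map_ofFn, Function.comp_def]

theorem count_runLengthDecode [DecidableEq α] (c : Fin k → ℕ) (z : Fin k → α) (v : α) :
    (runLengthDecode c z).count v = ∑ i, if z i = v then c i else 0 := by
  simp [runLengthDecode, List.count_flatten, List.map_ofFn, List.sum_ofFn, List.count_replicate]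

theorem count_runLengthDecode_apply [DecidableEq α] (c : Fin k → ℕ) (hz : Function.Injective z)
    (i : Fin k) : (runLengthDecode c z).count (z i) = c i := by
  simp [count_runLengthDecode, hz.eq_iff]

theorem count_runLengthDecode_of_notMem_range [DecidableEq α] (c : Fin k → ℕ) {v : α}
    (hv : v ∉ Set.range z) : (runLengthDecode c z).count v = 0 := by
  rw [count_runLengthDecode]
  exact Finset.sum_eq_zero fun i _ => if_neg fun hi => hv ⟨i, hi⟩

theorem sortedGE_runLengthDecode [Preorder α] (c : Fin k → ℕ) (hz : Antitone z) :
    (runLengthDecode c z).SortedGE := by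
  rw [List.sortedGE_iff_pairwise, runLengthDecode, List.pairwise_flatten, List.pairwise_ofFn]
  refine ⟨fun l hl => ?_, fun i j hij x hx y hy => ?_⟩
  · obtain ⟨i, rfl⟩ := List.mem_ofFn.1 hl
    simp [List.pairwise_replicate]
  · rw [List.eq_of_mem_replicate hx, List.eq_of_mem_replicate hy]
    exact hz hij.le

end RunLengthDecode

section Sorted

variable {α : Type*} [LinearOrder α]

theorem runLengthDecode_count {k : ℕ} {z : Fin k → α} (hz : StrictAnti z) {l : List α}
    (hl : l.SortedGE) (hrange : ∀ v, v ∈ Set.range z ↔ v ∈ l) :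
    runLengthDecode (fun i => l.count (z i)) z = l := by
  refine List.Perm.eq_of_sortedGE (sortedGE_runLengthDecode _ hz.antitone) hl
    (List.perm_iff_count.2 fun v => ?_)
  by_cases hv : v ∈ Set.range z
  · obtain ⟨i, rfl⟩ := hv
    exact count_runLengthDecode_apply _ hz.injective i
  · rw [count_runLengthDecode_of_notMem_range _ hv,
      List.count_eq_zero_of_not_mem (mt (hrange v).2 hv)]

theorem exists_strictAnti_range_eq (s : Finset α) :
    ∃ z : Fin s.card → α, StrictAnti z ∧ Set.range z = s := by
  refine ⟨s.orderEmbOfFin rfl ∘ Fin.rev,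
    (s.orderEmbOfFin rfl).strictMono.comp_strictAnti Fin.rev_strictAnti, ?_⟩
  rw [Fin.rev_surjective.range_comp, Finset.range_orderEmbOfFin]

theorem exists_runLengthDecode_eq {l : List α} (hl : l.SortedGE) :
    ∃ (k : ℕ) (c : Fin k → ℕ) (z : Fin k → α),
      (∀ i, 0 < c i) ∧ StrictAnti z ∧ runLengthDecode c z = l := by
  obtain ⟨z, hz, hrange⟩ := exists_strictAnti_range_eq l.toFinset
  have hmem : ∀ v, v ∈ Set.range z ↔ v ∈ l := fun v => by simp [hrange]
  exact ⟨_, fun i => l.count (z i), z,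
    fun i => List.count_pos_iff.2 ((hmem _).1 (Set.mem_range_self i)), hz,
    runLengthDecode_count hz hl hmem⟩

theorem eq_of_runLengthDecode_eq {k k' : ℕ} {c : Fin k → ℕ} {z : Fin k → α} {c' : Fin k' → ℕ}
    {z' : Fin k' → α} (hc : ∀ i, 0 < c i) (hz : StrictAnti z) (hc' : ∀ i, 0 < c' i)
    (hz' : StrictAnti z') (heq : runLengthDecode c z = runLengthDecode c' z') :
    (⟨k, c, z⟩ : Σ k : ℕ, (Fin k → ℕ) × (Fin k → α)) = ⟨k', c', z'⟩ := by
  have hrange : Set.range z = Set.range z' := by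
    ext v
    rw [← mem_runLengthDecode hc, heq, mem_runLengthDecode hc']
  obtain rfl : k = k' := by
    simpa [Set.ncard_range_of_injective, hz.injective, hz'.injective] using
      congrArg Set.ncard hrange
  obtain rfl : z = z' := (hz.range_inj hz').1 hrange
  obtain rfl : c = c' := funext fun i => by
    rw [← count_runLengthDecode_apply c hz.injective i, heq,
      count_runLengthDecode_apply c' hz.injective i]
  rfl

end Sorted

section BlockSums

variable {α : Type*} [LinearOrder α] {S : Finset α} {n : ℕ}

/-- The index set of the composition sum: triples `⟨k, c, z⟩` of a number of blocks, the block sizes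
`c`, which form a composition of `n`, and the strictly decreasing letters `z` of the blocks. -/
def blockIndices (S : Finset α) (n : ℕ) : Finset (Σ k : ℕ, (Fin k → ℕ) × (Fin k → α)) :=
  (Finset.Icc 1 n).sigma fun k =>
    {c ∈ Fintype.piFinset fun _ : Fin k => Finset.Icc 1 n | ∑ i, c i = n} ×ˢ
      {z ∈ Fintype.piFinset fun _ : Fin k => S | StrictAnti z}

theorem mem_blockIndices (hn : 1 ≤ n) {k : ℕ} {c : Fin k → ℕ} {z : Fin k → α} :
    ⟨k, c, z⟩ ∈ blockIndices S n ↔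
      ((∀ i, 0 < c i) ∧ ∑ i, c i = n) ∧ (∀ i, z i ∈ S) ∧ StrictAnti z := by
  simp only [blockIndices, Finset.mem_sigma, Finset.mem_product, Finset.mem_filter,
    Fintype.mem_piFinset, Finset.mem_Icc]
  refine ⟨fun ⟨_, ⟨hc, hsum⟩, hz⟩ => ⟨⟨fun i => (hc i).1, hsum⟩, hz⟩,
    fun ⟨⟨hc, hsum⟩, hz⟩ => ⟨⟨?_, ?_⟩, ⟨fun i => ⟨hc i, ?_⟩, hsum⟩, hz⟩⟩
  · rw [Nat.one_le_iff_ne_zero]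
    rintro rfl
    have hn_zero : 0 = n := by simpa using hsum
    omega
  · simpa [hsum] using Finset.card_nsmul_le_sum Finset.univ c 1 fun i _ => hc i
  · exact hsum ▸ Finset.single_le_sum_of_canonicallyOrdered (Finset.mem_univ i)

/-- The nonincreasing words of length `n` with letters in `S`. -/
def sortedWords (S : Finset α) (n : ℕ) : Finset (List α) :=
  {z ∈ Fintype.piFinset fun _ : Fin n => S | Antitone z}.map ⟨List.ofFn, List.ofFn_injective⟩

theorem mem_sortedWords {l : List α} :
    l ∈ sortedWords S n ↔ l.length = n ∧ l.SortedGE ∧ ∀ v ∈ l, v ∈ S := by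
  simp only [sortedWords, Finset.mem_map, Finset.mem_filter, Fintype.mem_piFinset,
    Function.Embedding.coeFn_mk]
  constructor
  · rintro ⟨z, ⟨hS, hz⟩, rfl⟩
    exact ⟨List.length_ofFn, hz.sortedGE_ofFn, List.forall_mem_ofFn_iff.2 hS⟩
  · rintro ⟨rfl, hl, hS⟩
    exact ⟨l.get, ⟨fun i => hS _ (List.get_mem l i), hl.antitone_get⟩, List.ofFn_get l⟩

theorem sum_blockIndices_runLengthDecode {M : Type*} [AddCommMonoid M] (hn : 1 ≤ n)
    (f : List α → M) :
    ∑ x ∈ blockIndices S n, f (runLengthDecode x.2.1 x.2.2) = ∑ l ∈ sortedWords S n, f l := by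
  refine Finset.sum_bij (fun x _ => runLengthDecode x.2.1 x.2.2) ?mapsTo ?inj ?surj fun _ _ => rfl
  case mapsTo =>
    rintro ⟨k, c, z⟩ hx
    obtain ⟨⟨hc, hsum⟩, hS, hz⟩ := (mem_blockIndices hn).1 hx
    refine mem_sortedWords.2 ⟨?_, sortedGE_runLengthDecode c hz.antitone, fun v hv => ?_⟩
    · rw [length_runLengthDecode, hsum]
    · obtain ⟨i, rfl⟩ := (mem_runLengthDecode hc).1 hv
      exact hS i
  case inj =>
    rintro ⟨k, c, z⟩ hx ⟨k', c', z'⟩ hx' heq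
    obtain ⟨⟨hc, -⟩, -, hz⟩ := (mem_blockIndices hn).1 hx
    obtain ⟨⟨hc', -⟩, -, hz'⟩ := (mem_blockIndices hn).1 hx'
    exact eq_of_runLengthDecode_eq hc hz hc' hz' heq
  case surj =>
    intro l hl
    obtain ⟨hlength, hsorted, hS⟩ := mem_sortedWords.1 hl
    obtain ⟨k, c, z, hc, hz, rfl⟩ := exists_runLengthDecode_eq hsorted
    refine ⟨⟨k, c, z⟩, (mem_blockIndices hn).2 ⟨⟨hc, ?_⟩, fun i => ?_, hz⟩, rfl⟩
    · rw [← length_runLengthDecode c z, hlength]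
    · exact hS _ ((mem_runLengthDecode hc).2 (Set.mem_range_self i))

end BlockSums

section MultiplicityWeight

variable {α : Type*} [DecidableEq α]

/-- The inverse of the product of the factorials of the multiplicities of the letters of `l`: the
value of `Υ` on a nonincreasing word, for letters of any type. -/
def multiplicityWeight (l : List α) : ℚ :=
  (∏ v ∈ l.toFinset, ((l.count v).factorial : ℚ))⁻¹

theorem multiplicityWeight_runLengthDecode {k : ℕ} {c : Fin k → ℕ} {z : Fin k → α}
    (hc : ∀ i, 0 < c i) (hz : Function.Injective z) :
    multiplicityWeight (runLengthDecode c z) = (∏ i, ((c i).factorial : ℚ))⁻¹ := by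
  have htoFinset : (runLengthDecode c z).toFinset = Finset.univ.image z := by
    ext v
    simp [mem_runLengthDecode hc]
  simp_rw [multiplicityWeight, htoFinset, Finset.prod_image hz.injOn,
    count_runLengthDecode_apply c hz]

theorem count_ofFn_eq_card_filter {n : ℕ} (z : Fin n → α) (v : α) :
    (List.ofFn z).count v = (Finset.univ.filter fun i => z i = v).card := by
  rw [← Multiset.coe_count, ← Fin.univ_val_map, Multiset.count_map]
  simp only [Finset.card, Finset.filter_val, eq_comm]

theorem upsilon_eq_ite_multiplicityWeight {n : ℕ} (z : Fin n → ℕ) :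
    Upsilon z = if Antitone z then multiplicityWeight (List.ofFn z) else 0 := by
  have htoFinset : (List.ofFn z).toFinset = Finset.univ.image z := by
    ext v
    simp [List.mem_ofFn]
  simp only [multiplicityWeight, htoFinset, count_ofFn_eq_card_filter, ← Nat.cast_prod]
  rfl

end MultiplicityWeight

theorem composition_sum_eq_upsilon_sum_general {α R : Type*} [LinearOrder α] [Semiring R]
    [Module ℚ R] (S : Finset α) {n : ℕ} (hn : 1 ≤ n) (h : α → R) :
    (∑ k ∈ Finset.Icc 1 n,
      ∑ c ∈ Fintype.piFinset fun _ : Fin k => Finset.Icc 1 n with ∑ i, c i = n,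
        ∑ z ∈ Fintype.piFinset fun _ : Fin k => S with StrictAnti z,
          (∏ i, ((c i).factorial : ℚ))⁻¹ • (List.ofFn fun i => h (z i) ^ c i).prod) =
      ∑ z ∈ Fintype.piFinset fun _ : Fin n => S with Antitone z,
        multiplicityWeight (List.ofFn z) • (List.ofFn fun i => h (z i)).prod := by
  let term (l : List α) : R := multiplicityWeight l • (l.map h).prod
  calc
    _ = ∑ x ∈ blockIndices S n,
        (∏ i, ((x.2.1 i).factorial : ℚ))⁻¹ • (List.ofFn fun i => h (x.2.2 i) ^ x.2.1 i).prod := by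
      simp only [blockIndices, Finset.sum_sigma, Finset.sum_product]
    _ = ∑ x ∈ blockIndices S n, term (runLengthDecode x.2.1 x.2.2) := by
      refine Finset.sum_congr rfl fun ⟨k, c, z⟩ hx => ?_
      obtain ⟨⟨hc, -⟩, -, hz⟩ := (mem_blockIndices hn).1 hx
      simp only [term, multiplicityWeight_runLengthDecode hc hz.injective, prod_map_runLengthDecode]
    _ = ∑ l ∈ sortedWords S n, term l := sum_blockIndices_runLengthDecode hn term
    _ = _ := by simp only [sortedWords, Finset.sum_map, Function.Embedding.coeFn_mk, term,
        List.map_ofFn, Function.comp_def]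

/-- In a `ℚ`-algebra `R`, for elements `h 1, …, h m` and any `n ≥ 1`, the sum over
`k`, over compositions `(n₁,…,n_k)` of `n` into positive parts, and over strictly
decreasing tuples `m ≥ z₁ > ⋯ > z_k ≥ 1` of `(1/(n₁!⋯n_k!)) • h_{z₁}^{n₁} ⋯ h_{z_k}^{n_k}`
equals `∑_{z ∈ {1,…,m}ⁿ} Υ(z) • h_{z₁} ⋯ h_{z_n}` (ordered products). -/
theorem composition_sum_eq_upsilon_sum {R : Type*} [Ring R] [Algebra ℚ R]
    (m n : ℕ) (hm : 1 ≤ m) (hn : 1 ≤ n) (h : ℕ → R) :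
    (∑ k ∈ Finset.Icc 1 n,
      ∑ nv ∈ (Fintype.piFinset fun _ : Fin k => Finset.Icc 1 n).filter
          (fun nv => ∑ i, nv i = n),
        ∑ z ∈ (Fintype.piFinset fun _ : Fin k => Finset.Icc 1 m).filter
            (fun z => ∀ i j : Fin k, i < j → z j < z i),
          ((∏ i, ((nv i).factorial : ℚ))⁻¹) •
            (List.ofFn fun i : Fin k => h (z i) ^ nv i).prod) =
      ∑ z ∈ Fintype.piFinset fun _ : Fin n => Finset.Icc 1 m,
        Upsilon z • (List.ofFn fun i : Fin n => h (z i)).prod := by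
  simp only [upsilon_eq_ite_multiplicityWeight, ite_smul, zero_smul, ← Finset.sum_filter]
  exact composition_sum_eq_upsilon_sum_general (Finset.Icc 1 m) hn h
end
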